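/- For every large enough integer n, in the unbiased Waiter-Client game played on the edge set of the complete graph K_n whose winning sets are the Hamilton cycles of K_n, the minimum number of rounds within which Waiter can force a win is exactly n + 1; that is, τ_WC(H_n, 1) = n + 1. -/

import Mathlib

open Finset

/-- `WaiterWins board b win t Cl W` means: starting from the position where Client owns the
elements of `Cl` and Waiter owns the elements of `W`, Waiter can force that within the next `t`
rounds of the `b`-biased Waiter-Client game on the board `board` a position is reached in which
the predicate `win` holds of (Client's elements, Waiter's elements).  In each round Waiter offers
`b+1` previously unclaimed board elements (or all remaining unclaimed elements, if fewer than
`b+1` remain); Client claims exactly one of them, the rest go to Waiter. -/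
def WaiterWins {X : Type*} [DecidableEq X] (board : Finset X) (b : ℕ)
    (win : Finset X → Finset X → Prop) :
    ℕ → Finset X → Finset X → Prop
  | 0, Cl, W => win Cl W
  | (t+1), Cl, W => win Cl W ∨
      ∃ O : Finset X, O.Nonempty ∧ O ⊆ board \ (Cl ∪ W) ∧
        O.card = min (b + 1) ((board \ (Cl ∪ W)).card) ∧
        ∀ x ∈ O, WaiterWins board b win t (insert x Cl) (W ∪ O.erase x)

/-- `tauWC board F b` : the smallest number of rounds within which Waiter can force Client's
elements to contain some member of the winning family `F`, in the `b`-biased Waiter-Client game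
on the board `board`. -/
noncomputable def tauWC {X : Type*} [DecidableEq X] (board : Finset X)
    (F : Set (Finset X)) (b : ℕ) : ℕ :=
  sInf {t | WaiterWins board b (fun Cl _ => ∃ A ∈ F, A ⊆ Cl) t ∅ ∅}

/-- The edge set of the complete graph on `Fin n`. -/
def Kedges (n : ℕ) : Finset (Sym2 (Fin n)) :=
  Finset.univ.filter (fun e => ¬ e.IsDiag)

/-- The family of edge sets of Hamilton cycles of `K_n`. -/
def HamFamily (n : ℕ) : Set (Finset (Sym2 (Fin n))) :=
  {F | ∃ (u : Fin n) (p : (⊤ : SimpleGraph (Fin n)).Walk u u),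
    p.IsHamiltonianCycle ∧ F = p.edges.toFinset}

/-! Lower bound: a Hamilton cycle has `n` edges, so winning within `n` rounds means that both
answers to the last offer complete Hamilton cycles which differ by exchanging a single edge. This
is impossible, since Hamilton cycles have even degrees.

Upper bound: Waiter repeatedly offers two edges from the end `u` of Client's path to vertices off
the path, so the path grows by one edge per round until a single vertex `w` is missing after
`n - 2` rounds. He then hooks `w` to an inner vertex `c` of the path, and two further offers close
a Hamilton cycle by a rotation. The edges needed for this are still unclaimed because near the
start Waiter only offers vertices that have not been offered before: every vertex outside the path
then has at most one claimed edge to a long segment at its start, the *base*, and so has each end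
of the path later on. -/

section Games

variable {X : Type*} [DecidableEq X] {board Cl W : Finset X}

theorem waiterWins_one_succ_iff {win : Finset X → Finset X → Prop} {t : ℕ}
    (hfree : 2 ≤ #(board \ (Cl ∪ W))) :
    WaiterWins board 1 win (t + 1) Cl W ↔ win Cl W ∨
      ∃ e ∈ board \ (Cl ∪ W), ∃ f ∈ board \ (Cl ∪ W), e ≠ f ∧
        WaiterWins board 1 win t (insert e Cl) (insert f W) ∧
        WaiterWins board 1 win t (insert f Cl) (insert e W) := by
  have erase_left {e f : X} (hef : e ≠ f) : W ∪ ({e, f} : Finset X).erase e = insert f W := by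
    rw [erase_insert (by simpa using hef), union_singleton]
  have erase_right {e f : X} (hef : e ≠ f) : W ∪ ({e, f} : Finset X).erase f = insert e W := by
    rw [pair_comm, erase_left hef.symm]
  rw [WaiterWins, min_eq_left hfree]
  refine or_congr_right ⟨?_, ?_⟩
  · rintro ⟨O, -, hsub, hcard, hO⟩
    obtain ⟨e, f, hef, rfl⟩ := card_eq_two.1 hcard
    rw [insert_subset_iff, singleton_subset_iff] at hsub
    refine ⟨e, hsub.1, f, hsub.2, hef, ?_, ?_⟩
    · simpa only [erase_left hef] using hO e (by simp)
    · simpa only [erase_right hef] using hO f (by simp)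
  · rintro ⟨e, he, f, hf, hef, hwe, hwf⟩
    refine ⟨{e, f}, by simp, insert_subset he (by simpa using hf), card_pair hef, ?_⟩
    rw [forall_mem_insert, erase_left hef]
    simpa only [mem_singleton, forall_eq, erase_right hef] using ⟨hwe, hwf⟩

theorem not_waiterWins_of_card_add_le {F : Set (Finset X)} {k t : ℕ}
    (hcard : ∀ A ∈ F, #A = k)
    (hswap : ∀ C, ∀ e ∉ C, ∀ f ∉ C, insert e C ∈ F → insert f C ∈ F → e = f)
    (hboard : 2 * k ≤ #board) (hlt : #Cl < k) (ht : #Cl + t ≤ k)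
    (hclaimed : #(Cl ∪ W) ≤ 2 * #Cl) :
    ¬ WaiterWins board 1 (fun Cl _ => ∃ A ∈ F, A ⊆ Cl) t Cl W := by
  have not_win {Cl : Finset X} (hlt : #Cl < k) : ¬ ∃ A ∈ F, A ⊆ Cl := by
    rintro ⟨A, hA, hsub⟩
    exact hlt.not_ge (hcard A hA ▸ card_le_card hsub)
  induction t generalizing Cl W with
  | zero => exact not_win hlt
  | succ t ih =>
    have hfree : 2 ≤ #(board \ (Cl ∪ W)) := by
      have := le_card_sdiff (Cl ∪ W) board
      omega
    rw [waiterWins_one_succ_iff hfree]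
    rintro (hwin | ⟨e, he, f, hf, hef, hwe, hwf⟩)
    · exact not_win hlt hwin
    simp only [mem_sdiff, mem_union, not_or] at he hf
    have hcard_insert : #(insert e Cl) = #Cl + 1 := card_insert_of_notMem he.2.1
    obtain hlt' | hlast := lt_or_ge (#Cl + 1) k
    · refine ih (by omega) (by omega) ?_ hwe
      calc #(insert e Cl ∪ insert f W)
          = #(insert e (insert f (Cl ∪ W))) := by rw [insert_union, union_insert]
        _ ≤ #(Cl ∪ W) + 1 + 1 :=
          (card_insert_le _ _).trans (Nat.succ_le_succ (card_insert_le _ _))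
        _ ≤ 2 * #(insert e Cl) := by omega
    · obtain rfl : t = 0 := by omega
      have insert_mem {g : X} (hg : g ∉ Cl) (hwin : ∃ A ∈ F, A ⊆ insert g Cl) :
          insert g Cl ∈ F := by
        obtain ⟨A, hA, hsub⟩ := hwin
        rwa [← eq_of_subset_of_card_le hsub]
        rw [card_insert_of_notMem hg, hcard A hA]
        omega
      exact hef (hswap Cl e he.2.1 f hf.2.1 (insert_mem he.2.1 hwe) (insert_mem hf.2.1 hwf))

end Games

section LowerBound

variable {n : ℕ}

theorem card_of_mem_HamFamily {A : Finset (Sym2 (Fin n))} (hA : A ∈ HamFamily n) :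
    #A = n := by
  obtain ⟨u, p, hp, rfl⟩ := hA
  rw [List.toFinset_card_of_nodup hp.isCycle.isTrail.edges_nodup, SimpleGraph.Walk.length_edges,
    hp.length_eq, Fintype.card_fin]

theorem even_card_filter_mem_of_mem_HamFamily {A : Finset (Sym2 (Fin n))}
    (hA : A ∈ HamFamily n) (x : Fin n) : Even #(A.filter (x ∈ ·)) := by
  obtain ⟨u, p, hp, rfl⟩ := hA
  have htrail := hp.isCycle.isTrail
  have hfilter : p.edges.toFinset.filter (x ∈ ·)
      = (p.edges.filter (fun e => decide (x ∈ e))).toFinset := by ext; simp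
  rw [hfilter, List.toFinset_card_of_nodup (htrail.edges_nodup.filter _),
    ← List.countP_eq_length_filter]
  exact (htrail.even_countP_edges_iff x).2 (absurd rfl)

theorem eq_of_insert_mem_HamFamily {C : Finset (Sym2 (Fin n))} {e f : Sym2 (Fin n)}
    (he : e ∉ C) (hf : f ∉ C) (hCe : insert e C ∈ HamFamily n) (hCf : insert f C ∈ HamFamily n) :
    e = f := by
  have parity {g : Sym2 (Fin n)} (hg : g ∉ C) (hCg : insert g C ∈ HamFamily n) (x : Fin n) :
      x ∈ g ↔ ¬ Even #(C.filter (x ∈ ·)) := by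
    have heven := even_card_filter_mem_of_mem_HamFamily hCg x
    rw [filter_insert] at heven
    split_ifs at heven with hx
    · rw [card_insert_of_notMem (by simp [hg]), Nat.even_add_one] at heven
      exact iff_of_true hx heven
    · exact iff_of_false hx (not_not.2 heven)
  exact Sym2.ext fun x => (parity he hCe x).trans (parity hf hCf x).symm

theorem card_Kedges (n : ℕ) : #(Kedges n) = n.choose 2 := by
  have := Sym2.card_subtype_not_diag (α := Fin n)
  rwa [Fintype.card_subtype, Fintype.card_fin] at this

theorem two_mul_le_choose_two (hn : 5 ≤ n) : 2 * n ≤ n.choose 2 := by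
  rw [Nat.choose_two_right, Nat.le_div_iff_mul_le two_pos, mul_right_comm, mul_comm]
  exact Nat.mul_le_mul_left n (by omega)

theorem lt_of_waiterWins_HamFamily (hn : 5 ≤ n) {t : ℕ}
    (hwin : WaiterWins (Kedges n) 1 (fun Cl _ => ∃ A ∈ HamFamily n, A ⊆ Cl) t ∅ ∅) : n < t := by
  by_contra! ht
  refine not_waiterWins_of_card_add_le (fun _ => card_of_mem_HamFamily)
    (fun _ _ he _ hf => eq_of_insert_mem_HamFamily he hf) ?_ ?_ ?_ ?_ hwin
  · exact (card_Kedges n).symm ▸ two_mul_le_choose_two hn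
  · simpa using by omega
  · simpa using ht
  · simp

end LowerBound

section DeleteEdges

open SimpleGraph

variable {V : Type*} {G : SimpleGraph V} {a b c x y : V}

theorem deleteEdges_adj_of_ne_center (h : G.Adj b c) (hb : b ≠ a) (hc : c ≠ a) :
    (G.deleteEdges {s(a, x), s(a, y)}).Adj b c := by
  simp [h, hb, hc]

theorem deleteEdges_adj_of_ne (h : G.Adj b c) (ha : c ≠ a) (hx : c ≠ x) (hy : c ≠ y) :
    (G.deleteEdges {s(a, x), s(a, y)}).Adj b c := by
  simp [h, ha, hx, hy]

end DeleteEdges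

section Hamiltonicity

open SimpleGraph

variable {V : Type*} {G : SimpleGraph V}

theorem isChain_adj_reverse {l : List V} : l.reverse.IsChain G.Adj ↔ l.IsChain G.Adj := by
  rw [List.isChain_reverse]
  simp_rw [G.adj_comm]

variable [Fintype V] [DecidableEq V]

theorem isHamiltonian_of_isChain {a z : V} {l : List V} (hnd : (a :: (l ++ [z])).Nodup)
    (hlen : (a :: (l ++ [z])).length = Fintype.card V) (hl : l ≠ [])
    (hchain : (a :: (l ++ [z])).IsChain G.Adj) (hza : G.Adj z a) : G.IsHamiltonian := by
  let p := Walk.ofSupport _ (by simp) hchain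
  have hpath : p.IsPath := by rwa [Walk.isPath_def, Walk.support_ofSupport]
  have hplen : p.length = l.length + 1 := by
    rw [Walk.length_ofSupport, List.length_cons, List.length_append, List.length_singleton]; rfl
  refine fun _ => ⟨_, .cons (by simpa using hza) p, ?_⟩
  rw [Walk.isHamiltonianCycle_iff_isCycle_and_length_eq, Walk.cons_isCycle_iff, Walk.length_cons,
    hplen]
  refine ⟨⟨hpath, fun hmem => hl ?_⟩, by simpa using hlen⟩
  have := hpath.length_eq_one_of_mem_edges (Sym2.eq_swap ▸ hmem)
  exact List.length_eq_zero_iff.1 (by omega)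

/- The Hamilton cycles are `w c q ⋯ u v ⋯ p`, `w c p ⋯ v u ⋯ q`, `w v ⋯ p u ⋯ q c` and
`w u ⋯ q c p ⋯ v`. -/
theorem isHamiltonian_of_path_split {w u q c p v : V} {A D : List V}
    (hnd : (w :: u :: (A ++ q :: c :: p :: (D ++ [v]))).Nodup)
    (hlen : (w :: u :: (A ++ q :: c :: p :: (D ++ [v]))).length = Fintype.card V)
    (hchain : (u :: (A ++ q :: c :: p :: (D ++ [v]))).IsChain G.Adj) (hwc : G.Adj w c)
    (hclose : (G.Adj v u ∧ (G.Adj w p ∨ G.Adj w q)) ∨ (G.Adj v w ∧ (G.Adj u p ∨ G.Adj u w))) :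
    G.IsHamiltonian := by
  obtain ⟨huq, hqc, hcp, hpv⟩ : (u :: (A ++ [q])).IsChain G.Adj ∧ G.Adj q c ∧ G.Adj c p ∧
      (p :: (D ++ [v])).IsChain G.Adj := by
    simpa only [List.isChain_cons_append_cons_cons, List.isChain_cons_cons] using hchain
  have hqu : (q :: (A.reverse ++ [u])).IsChain G.Adj := by
    simpa using isChain_adj_reverse.2 huq
  have hvp : (v :: (D.reverse ++ [p])).IsChain G.Adj := by
    simpa using isChain_adj_reverse.2 hpv
  have close {z : V} {l : List V}
      (hcount : ∀ x, (w :: (l ++ [z])).count x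
        = (w :: u :: (A ++ q :: c :: p :: (D ++ [v]))).count x)
      (hchain : (w :: (l ++ [z])).IsChain G.Adj) (hzw : G.Adj z w) : G.IsHamiltonian := by
    have hperm := List.perm_iff_count.2 hcount
    have hlen' := hperm.length_eq.trans hlen
    refine isHamiltonian_of_isChain (hperm.nodup_iff.2 hnd) hlen' ?_ hchain hzw
    rintro rfl
    simp only [List.length_cons, List.length_append, List.length_nil] at hlen hlen'
    omega
  rcases hclose with ⟨hvu, hwp | hwq⟩ | ⟨hvw, hup | huw⟩
  · refine close (z := p) (l := c :: q :: (A.reverse ++ u :: v :: D.reverse)) ?_ ?_ hwp.symm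
    · exact fun x => by simp only [List.count_cons, List.count_append, List.count_reverse]; ring
    · simpa [hwc, hqc.symm, hvu.symm, hvp] using hqu
  · refine close (z := q) (l := c :: p :: (D ++ v :: u :: A)) ?_ ?_ hwq.symm
    · exact fun x => by simp only [List.count_cons, List.count_append]; ring
    · simpa [hwc, hcp, hvu, huq] using hpv
  · refine close (z := c) (l := v :: (D.reverse ++ p :: u :: (A ++ [q]))) ?_ ?_ hwc.symm
    · exact fun x => by
        simp only [List.count_cons, List.count_append, List.count_reverse, List.count_nil]
        ring
    · simpa [hvw.symm, hup.symm, hqc, hvp] using huq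
  · refine close (z := v) (l := u :: (A ++ q :: c :: p :: D)) ?_ ?_ hvw
    · exact fun x => by simp only [List.count_cons, List.count_append]; ring
    · simpa [huw.symm] using hchain

end Hamiltonicity

section Windows

variable {α : Type*} {l : List α}

theorem idxOf_div_eq_of_mem_take_drop [DecidableEq α] (hl : l.Nodup) {m i : ℕ} {x : α}
    (hx : x ∈ (l.drop (m * i)).take m) : l.idxOf x / m = i := by
  obtain ⟨j, hj, rfl⟩ := List.mem_take_iff_getElem.1 hx
  rw [List.getElem_drop, hl.idxOf_getElem]
  have hjm : j < m := by omega
  rw [Nat.mul_add_div (by omega), Nat.div_eq_of_lt hjm, add_zero]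

theorem exists_disjoint_infixes_avoiding (hl : l.Nodup) (B : Finset α) {m : ℕ}
    (hlen : m * (#B + 2) ≤ l.length) :
    ∃ s t, s <:+: l ∧ t <:+: l ∧ s.length = m ∧ t.length = m ∧ s.Disjoint t ∧
      (∀ x ∈ s, x ∉ B) ∧ ∀ x ∈ t, x ∉ B := by
  classical
  let window (i : ℕ) : List α := (l.drop (m * i)).take m
  let hit := B.image fun b => l.idxOf b / m
  obtain ⟨i, hi, j, hj, hij⟩ :
      ∃ i ∈ range (#B + 2) \ hit, ∃ j ∈ range (#B + 2) \ hit, i ≠ j := by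
    refine one_lt_card.1 ?_
    have hcard := le_card_sdiff hit (range (#B + 2))
    have himage : #hit ≤ #B := card_image_le
    rw [card_range] at hcard
    omega
  have window_infix (i : ℕ) : window i <:+: l :=
    (List.take_prefix _ _).isInfix.trans (List.drop_suffix _ _).isInfix
  have length_window {i : ℕ} (hi : i ∈ range (#B + 2) \ hit) : (window i).length = m := by
    have hi' : i + 1 ≤ #B + 2 := mem_range.1 (mem_sdiff.1 hi).1
    have := (Nat.mul_le_mul_left m hi').trans hlen
    rw [mul_add_one] at this
    rw [List.length_take, List.length_drop]
    omega
  have window_avoids {i : ℕ} (hi : i ∈ range (#B + 2) \ hit) (x : α) (hx : x ∈ window i) :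
      x ∉ B := fun hxB =>
    (mem_sdiff.1 hi).2 (mem_image.2 ⟨x, hxB, idxOf_div_eq_of_mem_take_drop hl hx⟩)
  refine ⟨window i, window j, window_infix i, window_infix j, length_window hi, length_window hj,
    fun x hxi hxj => hij ?_, window_avoids hi, window_avoids hj⟩
  rw [← idxOf_div_eq_of_mem_take_drop hl hxi, idxOf_div_eq_of_mem_take_drop hl hxj]

end Windows

/-- Waiter can force Client to complete a Hamilton cycle within `t` rounds from every position in
which Client owns all edges of `G` and no edge of `R` has been claimed. Further edges may be
claimed by either player, so the property is monotone in both graphs. -/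
def ForcesHamilton {n : ℕ} (t : ℕ) (G R : SimpleGraph (Fin n)) : Prop :=
  ∀ Cl W : Finset (Sym2 (Fin n)), G.edgeSet ⊆ Cl → Disjoint R.edgeSet ↑(Cl ∪ W) →
    WaiterWins (Kedges n) 1 (fun Cl _ => ∃ A ∈ HamFamily n, A ⊆ Cl) t Cl W

namespace ForcesHamilton

open SimpleGraph

variable {n t : ℕ} {G R : SimpleGraph (Fin n)}

theorem zero (hn : n ≠ 1) (hG : G.IsHamiltonian) : ForcesHamilton 0 G R := by
  obtain ⟨a, p, hp⟩ := hG (by rwa [Fintype.card_fin])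
  intro Cl W hCl _
  refine ⟨(p.mapLe le_top).edges.toFinset,
    ⟨a, _, hp.map (f := .ofLE le_top) Function.bijective_id, rfl⟩, fun e he => ?_⟩
  rw [List.mem_toFinset, Walk.edges_mapLe_eq_edges] at he
  exact hCl (p.edges_subset_edgeSet he)

theorem succ {a x y : Fin n} (hx : R.Adj a x) (hy : R.Adj a y) (hxy : x ≠ y)
    (hforce_x : ForcesHamilton t (G ⊔ edge a x) (R.deleteEdges {s(a, x), s(a, y)}))
    (hforce_y : ForcesHamilton t (G ⊔ edge a y) (R.deleteEdges {s(a, y), s(a, x)})) :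
    ForcesHamilton (t + 1) G R := by
  intro Cl W hCl hW
  have unclaimed {z : Fin n} (hz : R.Adj a z) : s(a, z) ∈ Kedges n \ (Cl ∪ W) := by
    refine mem_sdiff.2 ⟨by simpa [Kedges] using hz.ne, fun hmem => ?_⟩
    exact Set.disjoint_left.1 hW hz hmem
  have hne : s(a, x) ≠ s(a, y) := mt Sym2.congr_right.1 hxy
  have play {x y : Fin n}
      (h : ForcesHamilton t (G ⊔ edge a x) (R.deleteEdges {s(a, x), s(a, y)})) :
      WaiterWins (Kedges n) 1 (fun Cl _ => ∃ A ∈ HamFamily n, A ⊆ Cl) t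
        (insert s(a, x) Cl) (insert s(a, y) W) := by
    refine h _ _ ?_ ?_
    · rw [edgeSet_sup, coe_insert, Set.insert_eq, Set.union_comm]
      exact Set.union_subset_union edgeSet_edge_subset hCl
    · rw [edgeSet_deleteEdges, insert_union, union_insert, coe_insert, coe_insert]
      rw [Set.disjoint_left] at hW ⊢
      grind
  exact (waiterWins_one_succ_iff (one_lt_card.2 ⟨_, unclaimed hx, _, unclaimed hy, hne⟩)).2
    (.inr ⟨_, unclaimed hx, _, unclaimed hy, hne, play hforce_x, play hforce_y⟩)

theorem two_of_path_split {w u q c p v : Fin n} {A D : List (Fin n)}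
    (hnd : (w :: u :: (A ++ q :: c :: p :: (D ++ [v]))).Nodup)
    (hlen : (w :: u :: (A ++ q :: c :: p :: (D ++ [v]))).length = n)
    (hchain : (u :: (A ++ q :: c :: p :: (D ++ [v]))).IsChain G.Adj) (hwc : G.Adj w c)
    (hvu : R.Adj v u) (hvw : R.Adj v w) (huw : R.Adj u w)
    (hwp : R.Adj w p) (hwq : R.Adj w q) (hup : R.Adj u p) :
    ForcesHamilton 2 G R := by
  have hpv : p ≠ v := by grind
  have hqu : q ≠ u := by grind
  have hqv : q ≠ v := by grind
  have hpq : p ≠ q := by grind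
  have win {H S : SimpleGraph (Fin n)} (hGH : G ≤ H)
      (hclose : (H.Adj v u ∧ (H.Adj w p ∨ H.Adj w q)) ∨ (H.Adj v w ∧ (H.Adj u p ∨ H.Adj u w))) :
      ForcesHamilton 0 H S := by
    refine zero ?_ (isHamiltonian_of_path_split hnd (by rwa [Fintype.card_fin])
      (hchain.imp fun _ _ h => hGH h) (hGH hwc) hclose)
    rintro rfl
    simp at hlen
  have le_sup_sup {H H' : SimpleGraph (Fin n)} : G ≤ G ⊔ H ⊔ H' := le_sup_left.trans le_sup_left
  refine succ hvu hvw huw.ne ?_ ?_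
  · refine succ (a := w) (x := p) (y := q) (deleteEdges_adj_of_ne hwp hpv hup.ne' hwp.ne')
      (deleteEdges_adj_of_ne hwq hqv hqu hwq.ne') hpq ?_ ?_ <;>
    exact win le_sup_sup (by simp [sup_adj, edge_adj, hwp.ne, hwq.ne, hvu.ne])
  · refine succ (a := u) (x := p) (y := w) (deleteEdges_adj_of_ne hup hpv hwp.ne' hup.ne')
      (deleteEdges_adj_of_ne_center huw hvu.ne' hvw.ne') hwp.ne' ?_ ?_ <;>
    exact win le_sup_sup (by simp [sup_adj, edge_adj, huw.ne, hup.ne, hvw.ne])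

end ForcesHamilton

/-- Client owns the path `u :: (l ++ [v])`, given by its edges in `G`, and the graph `R` of
unclaimed edges contains all pairs of vertices that are not inner vertices of this path. Moreover
`base` is a segment of the path such that every vertex which is not inner is joined in `R` to all
vertices of `base` except at most one. -/
structure PathPosition {V : Type*} (G R : SimpleGraph V) (base : List V) (u : V) (l : List V)
    (v : V) : Prop where
  nodup : (u :: (l ++ [v])).Nodup
  isChain : (u :: (l ++ [v])).IsChain G.Adj
  base_infix : base <:+: l
  isClique : R.IsClique {x | x ∉ l}
  exists_exception : ∀ x ∉ l, ∃ b₀, ∀ b ∈ base, b ≠ b₀ → R.Adj x b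

namespace PathPosition

open SimpleGraph

section

variable {V : Type*} {G R : SimpleGraph V} {base l : List V} {u v x y : V}

theorem left_notMem (h : PathPosition G R base u l v) : u ∉ l :=
  fun hul => (List.nodup_cons.1 h.nodup).1 (List.mem_append_left _ hul)

theorem right_notMem (h : PathPosition G R base u l v) : v ∉ l := by
  have := h.nodup
  grind

theorem left_ne_right (h : PathPosition G R base u l v) : u ≠ v := by
  rintro rfl
  simpa using h.nodup

theorem adj_left (h : PathPosition G R base u l v) (hx : x ∉ u :: (l ++ [v])) : R.Adj u x := by
  simp only [List.mem_cons, List.mem_append, not_or] at hx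
  exact h.isClique h.left_notMem hx.2.1 (Ne.symm hx.1)

theorem initial {a : V} (hnd : [u, a, v].Nodup) :
    PathPosition (⊥ ⊔ edge a v ⊔ edge a u)
      (((⊤ : SimpleGraph V).deleteEdges {s(a, v), s(a, x)}).deleteEdges {s(a, u), s(a, y)})
      [] u [a] v where
  nodup := hnd
  isChain := by
    simp only [List.nodup_cons, List.mem_cons, not_or] at hnd
    simp [edge_adj, hnd.1.1, hnd.2.1.1]
  base_infix := List.nil_infix
  isClique b hb c hc hne := by
    rw [Set.mem_ofPred_eq, List.mem_singleton] at hb hc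
    exact deleteEdges_adj_of_ne_center (deleteEdges_adj_of_ne_center hne hb hc) hb hc
  exists_exception z _ := ⟨z, by simp⟩

theorem extend (h : PathPosition G R base u l v) (hx : x ∉ u :: (l ++ [v])) :
    PathPosition (G ⊔ edge u x) (R.deleteEdges {s(u, x), s(u, y)}) base x (u :: l) v where
  nodup := List.nodup_cons.2 ⟨hx, h.nodup⟩
  isChain := by
    have hxu : x ≠ u := (List.mem_cons.not.1 hx) ∘ .inl
    exact .cons_cons (by simp [sup_adj, edge_adj, hxu]) (h.isChain.imp fun _ _ => .inl)
  base_infix := h.base_infix.trans (List.suffix_cons u l).isInfix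
  isClique z hz z' hz' hne := by
    simp only [Set.mem_ofPred_eq, List.mem_cons, not_or] at hz hz'
    exact deleteEdges_adj_of_ne_center (h.isClique hz.2 hz'.2 hne) hz.1 hz'.1
  exists_exception z hz := by
    rw [List.mem_cons, not_or] at hz
    obtain ⟨b₀, hb₀⟩ := h.exists_exception z hz.2
    refine ⟨b₀, fun b hb hne => deleteEdges_adj_of_ne_center (hb₀ b hb hne) hz.1 ?_⟩
    rintro rfl
    exact h.left_notMem (h.base_infix.subset hb)

theorem extend_base (h : PathPosition G R base u l v) (hbase : base <+: l)
    (hx : x ∉ u :: (l ++ [v])) (hxbase : ∀ b ∈ base, R.Adj x b)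
    (hybase : ∀ b ∈ base, R.Adj y b) :
    PathPosition (G ⊔ edge u x) (R.deleteEdges {s(u, x), s(u, y)}) (u :: base) x (u :: l) v := by
  have hext := h.extend (y := y) hx
  refine { hext with
    base_infix := (List.cons_prefix_cons.2 ⟨rfl, hbase⟩).isInfix
    exists_exception := fun z hz => ?_ }
  rw [List.mem_cons, not_or] at hz
  by_cases hzxy : z = x ∨ z = y
  · refine ⟨u, fun b hb hbu => deleteEdges_adj_of_ne_center ?_ hz.1 hbu⟩
    have hb' : b ∈ base := (List.mem_cons.1 hb).resolve_left hbu
    exact hzxy.elim (fun h => h ▸ hxbase b hb') (fun h => h ▸ hybase b hb')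
  · rw [not_or] at hzxy
    obtain ⟨b₀, hb₀⟩ := hext.exists_exception z (by simp [hz])
    refine ⟨b₀, List.forall_mem_cons.2 ⟨fun _ => ?_, hb₀⟩⟩
    have huz : R.Adj u z := h.isClique h.left_notMem hz.2 (Ne.symm hz.1)
    exact (deleteEdges_adj_of_ne huz hz.1 hzxy.1 hzxy.2).symm

end

variable {n : ℕ} {G R : SimpleGraph (Fin n)} {base l : List (Fin n)} {u v w : Fin n}

theorem forcesHamilton_two {A D : List (Fin n)} {q c p c' : Fin n}
    (h : PathPosition G R base u (A ++ q :: c :: p :: D) v) (hc' : c' ∈ A ++ q :: c :: p :: D)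
    (hqc' : q ≠ c') (hpc' : p ≠ c')
    (hw : w ∉ u :: (A ++ q :: c :: p :: D ++ [v])) (hlen : (A ++ q :: c :: p :: D).length + 3 = n)
    (hwp : R.Adj w p) (hwq : R.Adj w q) (hup : R.Adj u p) :
    ForcesHamilton 2 (G ⊔ edge w c) (R.deleteEdges {s(w, c), s(w, c')}) := by
  set l := A ++ q :: c :: p :: D with hl
  have hnd : (w :: u :: (l ++ [v])).Nodup := List.nodup_cons.2 ⟨hw, h.nodup⟩
  have hwl : w ∉ l := fun hwl => hw (.tail _ (List.mem_append_left _ hwl))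
  have hwu : w ≠ u := fun hwu => hw (hwu ▸ .head _)
  have hwv : w ≠ v := by rintro rfl; simp at hw
  have hcl : c ∈ l := by simp [hl]
  obtain ⟨hqc, hpc⟩ : q ≠ c ∧ p ≠ c := by grind
  have survives_of_notMem {x y : Fin n} (hxy : R.Adj x y) (hy : y ∉ l) (hyw : y ≠ w) :
      (R.deleteEdges {s(w, c), s(w, c')}).Adj x y :=
    deleteEdges_adj_of_ne hxy hyw (ne_of_mem_of_not_mem hcl hy).symm
      (ne_of_mem_of_not_mem hc' hy).symm
  have huw := survives_of_notMem (h.isClique hwl h.left_notMem hwu) h.left_notMem hwu.symm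
  have hvw := survives_of_notMem (h.isClique hwl h.right_notMem hwv) h.right_notMem hwv.symm
  have hvu := survives_of_notMem (h.isClique h.right_notMem h.left_notMem h.left_ne_right.symm)
    h.left_notMem hwu.symm
  have heq : l ++ [v] = A ++ q :: c :: p :: (D ++ [v]) := by simp [hl]
  rw [heq] at hnd
  refine .two_of_path_split hnd (by rw [← heq]; simpa using hlen)
    ((heq ▸ h.isChain).imp fun _ _ => .inl) (.inr ?_) hvu hvw.symm huw.symm
    (deleteEdges_adj_of_ne hwp hwp.ne' hpc hpc') (deleteEdges_adj_of_ne hwq hwq.ne' hqc hqc')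
    (deleteEdges_adj_of_ne hup hwp.ne' hpc hpc')
  simpa [edge_adj] using (ne_of_mem_of_not_mem hcl hwl).symm

theorem forcesHamilton_three (h : PathPosition G R base u l v) (hbase : 12 ≤ base.length)
    (hw : w ∉ u :: (l ++ [v])) (hlen : l.length + 3 = n) : ForcesHamilton 3 G R := by
  have hwl : w ∉ l := fun hwl => hw (.tail _ (List.mem_append_left _ hwl))
  obtain ⟨bw, hbw⟩ := h.exists_exception w hwl
  obtain ⟨bu, hbu⟩ := h.exists_exception u h.left_notMem
  have hnd : base.Nodup := h.base_infix.sublist.nodup (by have := h.nodup; grind)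
  let B : Finset (Fin n) := {bw, bu}
  -- Of four disjoint windows of three vertices, two avoid both exceptions; Waiter offers to hook
  -- `w` to the middle of either of them.
  obtain ⟨s, t, hs, ht, hslen, htlen, hdisj, hsB, htB⟩ :=
    exists_disjoint_infixes_avoiding hnd B (m := 3)
      ((Nat.mul_le_mul_left 3 (Nat.add_le_add_right card_le_two 2)).trans hbase)
  obtain ⟨q, c, p, rfl⟩ := List.length_eq_three.1 hslen
  obtain ⟨q', c', p', rfl⟩ := List.length_eq_three.1 htlen
  have adj_w {x : Fin n} (hx : x ∈ base) (hxB : x ∉ B) : R.Adj w x :=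
    hbw x hx (by rintro rfl; simp [B] at hxB)
  have adj_u {x : Fin n} (hx : x ∈ base) (hxB : x ∉ B) : R.Adj u x :=
    hbu x hx (by rintro rfl; simp [B] at hxB)
  have hook {q c p c' : Fin n} (hs : [q, c, p] <:+: base) (hsB : ∀ x ∈ [q, c, p], x ∉ B)
      (hc' : c' ∈ base) (hqc' : q ≠ c') (hpc' : p ≠ c') :
      ForcesHamilton 2 (G ⊔ edge w c) (R.deleteEdges {s(w, c), s(w, c')}) := by
    have hsub := hs.subset
    simp only [List.cons_subset, List.forall_mem_cons] at hsub hsB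
    obtain ⟨A, D, hl⟩ := hs.trans h.base_infix
    obtain rfl : l = A ++ q :: c :: p :: D := by simpa using hl.symm
    exact forcesHamilton_two h (h.base_infix.subset hc') hqc' hpc' hw hlen
      (adj_w hsub.2.2.1 hsB.2.2.1) (adj_w hsub.1 hsB.1) (adj_u hsub.2.2.1 hsB.2.2.1)
  have hc : c ∈ base := hs.subset (by simp)
  have hc' : c' ∈ base := ht.subset (by simp)
  have hne {x y : Fin n} (hx : x ∈ [q, c, p]) (hy : y ∈ [q', c', p']) : x ≠ y :=
    fun hxy => hdisj hx (hxy ▸ hy)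
  refine .succ (adj_w hc (hsB c (by simp))) (adj_w hc' (htB c' (by simp)))
    (hne (by simp) (by simp)) ?_ ?_
  · exact hook hs hsB hc' (hne (by simp) (by simp)) (hne (by simp) (by simp))
  · exact hook ht htB hc (hne (by simp) (by simp)).symm (hne (by simp) (by simp)).symm

theorem forcesHamilton_succ {t : ℕ} (h : PathPosition G R base u l v) {x y : Fin n}
    (hx : x ∉ u :: (l ++ [v])) (hy : y ∉ u :: (l ++ [v])) (hxy : x ≠ y)
    (hforce_x : ForcesHamilton t (G ⊔ edge u x) (R.deleteEdges {s(u, x), s(u, y)}))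
    (hforce_y : ForcesHamilton t (G ⊔ edge u y) (R.deleteEdges {s(u, y), s(u, x)})) :
    ForcesHamilton (t + 1) G R :=
  .succ (h.adj_left hx) (h.adj_left hy) hxy hforce_x hforce_y

theorem length_add_card_notMem (h : PathPosition G R base u l v) :
    l.length + 2 + #{z | z ∉ u :: (l ++ [v])} = n := by
  have hcompl : ({z | z ∉ u :: (l ++ [v])} : Finset (Fin n)) = (u :: (l ++ [v])).toFinsetᶜ := by
    ext z
    rw [mem_filter_univ, mem_compl, List.mem_toFinset]
  have hpath : #(u :: (l ++ [v])).toFinset = l.length + 2 := by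
    rw [List.toFinset_card_of_nodup h.nodup]
    simp
  rw [hcompl, ← hpath, card_add_card_compl, Fintype.card_fin]

theorem forcesHamilton_add_three (h : PathPosition G R base u l v) (hbase : 12 ≤ base.length)
    {k : ℕ} (hlen : l.length + 3 + k = n) : ForcesHamilton (k + 3) G R := by
  have hcard := h.length_add_card_notMem
  induction k generalizing G R u l with
  | zero =>
    obtain ⟨w, hw⟩ := card_pos.1 (show 0 < #{z | z ∉ u :: (l ++ [v])} by omega)
    exact h.forcesHamilton_three hbase (mem_filter_univ w |>.1 hw) hlen
  | succ k ih =>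
    obtain ⟨x, hx, y, hy, hxy⟩ := one_lt_card.1 (show 1 < #{z | z ∉ u :: (l ++ [v])} by omega)
    rw [mem_filter_univ] at hx hy
    have extend_forces {x y : Fin n} (hx : x ∉ u :: (l ++ [v])) :
        ForcesHamilton (k + 3) (G ⊔ edge u x) (R.deleteEdges {s(u, x), s(u, y)}) :=
      have hext := h.extend hx
      ih hext (by rw [List.length_cons]; omega) hext.length_add_card_notMem
    exact h.forcesHamilton_succ hx hy hxy (extend_forces hx) (extend_forces hy)

theorem forcesHamilton_of_fresh (h : PathPosition G R base u l v) (hprefix : base <+: l)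
    {F : Finset (Fin n)} (hpath : ∀ z ∈ F, z ∉ u :: (l ++ [v]))
    (hfresh : ∀ z ∈ F, ∀ b ∈ base, R.Adj z b) {k m : ℕ} (hF : 2 * k ≤ #F)
    (hbase : 12 ≤ base.length + k) (hlen : l.length + 3 + (m + k) = n) :
    ForcesHamilton (m + k + 3) G R := by
  induction k generalizing G R base u l F with
  | zero => exact h.forcesHamilton_add_three hbase hlen
  | succ k ih =>
    obtain ⟨x, hx, y, hy, hxy⟩ := one_lt_card.1 (show 1 < #F by omega)
    have extend_forces {x y : Fin n} (hx : x ∈ F) (hy : y ∈ F) :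
        ForcesHamilton (m + k + 3) (G ⊔ edge u x) (R.deleteEdges {s(u, x), s(u, y)}) := by
      have mem_rest {z : Fin n} (hz : z ∈ F \ {x, y}) : z ∈ F ∧ z ≠ x ∧ z ≠ y ∧ z ≠ u := by
        simp only [mem_sdiff, mem_insert, mem_singleton, not_or] at hz
        exact ⟨hz.1, hz.2.1, hz.2.2, List.ne_of_not_mem_cons (hpath z hz.1)⟩
      refine ih (h.extend_base hprefix (hpath x hx) (hfresh x hx) (hfresh y hy))
        (List.cons_prefix_cons.2 ⟨rfl, hprefix⟩) (F := F \ {x, y}) (fun z hz => ?_)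
        (fun z hz => List.forall_mem_cons.2 ⟨?_, fun b hb => ?_⟩) ?_ ?_ ?_
      · obtain ⟨hzF, hzx, -, -⟩ := mem_rest hz
        exact List.not_mem_cons_of_ne_of_not_mem hzx (hpath z hzF)
      · obtain ⟨hzF, hzx, hzy, hzu⟩ := mem_rest hz
        exact (deleteEdges_adj_of_ne (h.adj_left (hpath z hzF)) hzu hzx hzy).symm
      · obtain ⟨hzF, -, -, hzu⟩ := mem_rest hz
        exact deleteEdges_adj_of_ne_center (hfresh z hzF b hb) hzu
          (ne_of_mem_of_not_mem (hprefix.subset hb) h.left_notMem)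
      · have := le_card_sdiff {x, y} F
        have := card_le_two (a := x) (b := y)
        omega
      · rw [List.length_cons]; omega
      · rw [List.length_cons]; omega
    exact h.forcesHamilton_succ (hpath x hx) (hpath y hy) hxy (extend_forces hx hy)
      (extend_forces hy hx)

theorem forcesHamilton_of_nil {t : ℕ} (ht : 26 ≤ t) {G R : SimpleGraph (Fin (t + 1))}
    {a u v : Fin (t + 1)} (h : PathPosition G R [] u [a] v) : ForcesHamilton t G R := by
  obtain ⟨m, rfl⟩ := Nat.exists_eq_add_of_le' (show 15 ≤ t by omega)
  have hcard := h.length_add_card_notMem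
  rw [List.length_singleton] at hcard
  -- Twelve rounds build the base and consume two fresh vertices each.
  exact h.forcesHamilton_of_fresh (m := m) (k := 12) List.nil_prefix
    (fun z => (mem_filter_univ z).1) (by simp) (by omega) (by simp)
    (by rw [List.length_singleton]; omega)

end PathPosition

section UpperBound

open SimpleGraph

variable {n : ℕ}

theorem forcesHamilton_bot_top (hn : 27 ≤ n) :
    ForcesHamilton (n + 1) (⊥ : SimpleGraph (Fin n)) ⊤ := by
  obtain ⟨t, rfl⟩ := Nat.exists_eq_add_of_le' (show 1 ≤ n by omega)
  have second_round {a x y z w : Fin (t + 1)} (hnd : [a, x, y, z, w].Nodup) :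
      ForcesHamilton (t + 1) (⊥ ⊔ edge a x)
        ((⊤ : SimpleGraph (Fin (t + 1))).deleteEdges {s(a, x), s(a, y)}) := by
    have adj {b : Fin (t + 1)} (hba : b ≠ a) (hbx : b ≠ x) (hby : b ≠ y) :
        ((⊤ : SimpleGraph (Fin (t + 1))).deleteEdges {s(a, x), s(a, y)}).Adj a b :=
      deleteEdges_adj_of_ne hba.symm hba hbx hby
    refine .succ (a := a) (x := z) (y := w) (adj ?_ ?_ ?_) (adj ?_ ?_ ?_) ?_
      ((PathPosition.initial ?_).forcesHamilton_of_nil (by omega))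
      ((PathPosition.initial ?_).forcesHamilton_of_nil (by omega)) <;> grind
  let e : Fin 5 ↪ Fin (t + 1) := Fin.castLEEmb (by omega)
  have hnd : [e 0, e 1, e 2, e 3, e 4].Nodup := (List.nodup_finRange 5).map e.injective
  refine .succ (a := e 0) (x := e 1) (y := e 2) ?_ ?_ ?_ (second_round hnd)
    (second_round (hnd.perm (.cons _ (.swap _ _ _)))) <;> simp

theorem waiterWins_HamFamily (hn : 27 ≤ n) :
    WaiterWins (Kedges n) 1 (fun Cl _ => ∃ A ∈ HamFamily n, A ⊆ Cl) (n + 1) ∅ ∅ :=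
  forcesHamilton_bot_top hn ∅ ∅ (by simp) (by simp)

end UpperBound

/-- For every large enough `n`, in the unbiased Waiter-Client game on the edge set of `K_n`
whose winning sets are the Hamilton cycles of `K_n`, the minimum number of rounds within which
Waiter can force a win is exactly `n + 1`. -/
theorem WC_hamiltonicity_unbiased :
    ∃ n₀ : ℕ, ∀ n : ℕ, n₀ ≤ n →
      tauWC (Kedges n) (HamFamily n) 1 = n + 1 := by
  refine ⟨27, fun n hn => ?_⟩
  have hwin := waiterWins_HamFamily hn
  refine le_antisymm (Nat.sInf_le hwin) (le_csInf ⟨n + 1, hwin⟩ fun t ht => ?_)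
  exact lt_of_waiterWins_HamFamily (by omega) ht
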